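/- arXiv:2206.03663 — 4 statements merged into one kernel-verified Lean document; each statement's English description precedes it below -/
import Mathlib

section
/- Let $N \geq 3$ be a natural number and $m_0 > 0$. Let $M : [0,\infty) \to \mathbb{R}$ be continuous with $M(t) \geq m_0$ for all $t \geq 0$ and $\lim_{t \to +\infty} M(t)/t^{2/(N-2)} = 0$. Let $\bar\delta > 0$, $A > 0$, and let $h : (0,\bar\delta) \to (0,\infty)$ be continuous with $\lim_{\delta \to 0^+} h(\delta)/\delta^{N-2} = A$. Then there exist $K > 0$ and $\varepsilon_1 > 0$ such that for every $\varepsilon \in (0,\varepsilon_1)$ there exists $\delta_\varepsilon \in (0,\bar\delta)$ with $\varepsilon^2\, M\big(\varepsilon^{2-N} h(\delta_\varepsilon)\big) = \delta_\varepsilon^{\,2}$ and $\sqrt{m_0}\,\varepsilon \leq \delta_\varepsilon \leq K\varepsilon$. -/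
open MeasureTheory Filter

/-!
Put `p = N - 2` and rescale `δ = κ ε`, so that the equation becomes
`M (ε ^ (-p) * h (κ ε)) = κ ^ 2`. For fixed `κ` the argument of `M` tends to `A κ ^ p` as
`ε → 0⁺`, so the limiting equation is `M (A κ ^ p) = κ ^ 2`. Its left side is at least `m₀`,
and it is `o(κ ^ 2)` because `M t = o(t ^ (2 / p))`. Fix `K` with `M (A K ^ p) < K ^ 2`. By
continuity of `M` the strict inequality at `κ = K` persists for small `ε`, while at `κ = √m₀` the
lower bound on `M` gives the reverse inequality; the intermediate value theorem yields a
solution in between.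
-/

open Set Topology

theorem tendsto_rpow_neg_mul_comp_mul {h : ℝ → ℝ} {p A κ : ℝ} (hκ : 0 < κ)
    (hlim : Tendsto (fun δ => h δ / δ ^ p) (𝓝[>] 0) (𝓝 A)) :
    Tendsto (fun ε => ε ^ (-p) * h (κ * ε)) (𝓝[>] 0) (𝓝 (A * κ ^ p)) := by
  have hscale : Tendsto (fun ε => κ * ε) (𝓝[>] 0) (𝓝[>] 0) := by
    refine tendsto_nhdsWithin_iff.2 ⟨?_, ?_⟩
    · exact tendsto_nhdsWithin_of_tendsto_nhds
        (by simpa only [mul_zero] using (continuous_const_mul κ).tendsto 0)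
    · filter_upwards [self_mem_nhdsWithin] with ε hε using mul_pos hκ hε
  refine ((hlim.comp hscale).mul_const (κ ^ p)).congr' ?_
  filter_upwards [self_mem_nhdsWithin] with ε (hε : 0 < ε)
  have hκp : κ ^ p ≠ 0 := (Real.rpow_pos_of_pos hκ p).ne'
  simp only [Function.comp_apply, Real.mul_rpow hκ.le hε.le, Real.rpow_neg hε.le]
  field_simp

theorem tendsto_comp_mul_rpow_div_sq {M : ℝ → ℝ} {p A : ℝ} (hp : 0 < p) (hA : 0 ≤ A)
    (hM : Tendsto (fun t => M t / t ^ (2 / p)) atTop (𝓝 0)) :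
    Tendsto (fun κ => M (A * κ ^ p) / κ ^ 2) atTop (𝓝 0) := by
  obtain rfl | hA := hA.eq_or_lt
  · simpa only [zero_mul] using tendsto_const_nhds.div_atTop (tendsto_pow_atTop two_ne_zero)
  have harg : Tendsto (fun κ : ℝ => A * κ ^ p) atTop atTop :=
    (tendsto_rpow_atTop hp).const_mul_atTop hA
  have hprod : Tendsto (fun κ => M (A * κ ^ p) / (A * κ ^ p) ^ (2 / p) * A ^ (2 / p))
      atTop (𝓝 0) := by
    simpa only [zero_mul, Function.comp_apply] using (hM.comp harg).mul_const (A ^ (2 / p))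
  refine hprod.congr' ?_
  filter_upwards [eventually_gt_atTop 0] with κ hκ
  have hpow : (A * κ ^ p) ^ (2 / p) = A ^ (2 / p) * κ ^ 2 := by
    rw [Real.mul_rpow hA.le (Real.rpow_nonneg hκ.le p), ← Real.rpow_mul hκ.le,
      mul_div_cancel₀ _ hp.ne', Real.rpow_two]
  have hAp : A ^ (2 / p) ≠ 0 := (Real.rpow_pos_of_pos hA _).ne'
  rw [hpow]
  field_simp

theorem exists_pos_comp_mul_rpow_lt_sq {M : ℝ → ℝ} {p A : ℝ} (hp : 0 < p) (hA : 0 ≤ A)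
    (hM : Tendsto (fun t => M t / t ^ (2 / p)) atTop (𝓝 0)) :
    ∃ K > 0, M (A * K ^ p) < K ^ 2 := by
  have hratio := (tendsto_comp_mul_rpow_div_sq hp hA hM).eventually_lt_const one_pos
  obtain ⟨K, hlt, hK⟩ := (hratio.and (eventually_gt_atTop 0)).exists
  exact ⟨K, hK, (div_lt_one (pow_pos hK 2)).1 hlt⟩

theorem nonneg_of_tendsto_div_rpow {h : ℝ → ℝ} {p A δbar : ℝ} (hδbar : 0 < δbar)
    (hh : ∀ δ ∈ Ioo 0 δbar, 0 ≤ h δ)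
    (hlim : Tendsto (fun δ => h δ / δ ^ p) (𝓝[>] 0) (𝓝 A)) : 0 ≤ A := by
  refine ge_of_tendsto hlim ?_
  filter_upwards [Ioo_mem_nhdsGT hδbar] with δ hδ
  exact div_nonneg (hh δ hδ) (Real.rpow_nonneg hδ.1.le p)

theorem eventually_comp_rpow_neg_mul_lt {M h : ℝ → ℝ} {p A δbar K b : ℝ}
    (hM : ContinuousOn M (Ici 0)) (hδbar : 0 < δbar) (hh : ∀ δ ∈ Ioo 0 δbar, 0 ≤ h δ)
    (hlim : Tendsto (fun δ => h δ / δ ^ p) (𝓝[>] 0) (𝓝 A)) (hK : 0 < K)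
    (hb : M (A * K ^ p) < b) :
    ∀ᶠ ε in 𝓝[>] 0, K * ε < δbar ∧ M (ε ^ (-p) * h (K * ε)) < b := by
  have hsmall : ∀ᶠ ε in 𝓝[>] 0, 0 < ε ∧ K * ε < δbar := by
    filter_upwards [Ioo_mem_nhdsGT (div_pos hδbar hK)] with ε hε
    exact ⟨hε.1, (lt_div_iff₀' hK).1 hε.2⟩
  have hlimit : 0 ≤ A * K ^ p :=
    mul_nonneg (nonneg_of_tendsto_div_rpow hδbar hh hlim) (Real.rpow_nonneg hK.le p)
  have harg : Tendsto (fun ε => ε ^ (-p) * h (K * ε)) (𝓝[>] 0) (𝓝[Ici 0] (A * K ^ p)) := by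
    refine tendsto_nhdsWithin_iff.2 ⟨tendsto_rpow_neg_mul_comp_mul hK hlim, ?_⟩
    filter_upwards [hsmall] with ε ⟨hε, hKε⟩
    exact mul_nonneg (Real.rpow_nonneg hε.le _) (hh _ ⟨mul_pos hK hε, hKε⟩)
  filter_upwards [hsmall, ((hM _ hlimit).tendsto.comp harg).eventually_lt_const hb]
    with ε hε hlt using ⟨hε.2, hlt⟩

theorem exists_sq_mul_eq_sq {g : ℝ → ℝ} {m K ε : ℝ} (hm : 0 ≤ m) (hε : 0 ≤ ε) (hmK : √m ≤ K)
    (hg : ContinuousOn g (Icc (√m * ε) (K * ε))) (hlow : m ≤ g (√m * ε))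
    (hup : g (K * ε) ≤ K ^ 2) :
    ∃ δ ∈ Icc (√m * ε) (K * ε), ε ^ 2 * g δ = δ ^ 2 := by
  have hle : √m * ε ≤ K * ε := mul_le_mul_of_nonneg_right hmK hε
  have hstart : (√m * ε) ^ 2 ≤ ε ^ 2 * g (√m * ε) := calc
    (√m * ε) ^ 2 = ε ^ 2 * m := by rw [mul_pow, Real.sq_sqrt hm, mul_comm]
    _ ≤ ε ^ 2 * g (√m * ε) := mul_le_mul_of_nonneg_left hlow (sq_nonneg ε)
  have hend : ε ^ 2 * g (K * ε) ≤ (K * ε) ^ 2 := calc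
    ε ^ 2 * g (K * ε) ≤ ε ^ 2 * K ^ 2 := mul_le_mul_of_nonneg_left hup (sq_nonneg ε)
    _ = (K * ε) ^ 2 := by ring
  obtain ⟨δ, hδ, heq⟩ := isPreconnected_Icc.intermediate_value₂ (left_mem_Icc.2 hle)
    (right_mem_Icc.2 hle) (continuousOn_pow 2) (continuousOn_const.mul hg) hstart hend
  exact ⟨δ, hδ, heq.symm⟩

theorem exists_sq_mul_comp_eq_sq {M h : ℝ → ℝ} {m₀ δbar K ε c : ℝ} (hm₀ : 0 < m₀)
    (hM : ContinuousOn M (Ici 0)) (hm₀M : ∀ t, 0 ≤ t → m₀ ≤ M t)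
    (hhcont : ContinuousOn h (Ioo 0 δbar)) (hh : ∀ δ ∈ Ioo 0 δbar, 0 ≤ h δ)
    (hK : 0 < K) (hε : 0 < ε) (hKε : K * ε < δbar) (hc : 0 ≤ c)
    (hup : M (c * h (K * ε)) ≤ K ^ 2) :
    ∃ δ ∈ Ioo 0 δbar, ε ^ 2 * M (c * h δ) = δ ^ 2 ∧ √m₀ * ε ≤ δ ∧ δ ≤ K * ε := by
  have harg : MapsTo (fun δ => c * h δ) (Ioo 0 δbar) (Ici 0) :=
    fun δ hδ => mul_nonneg hc (hh δ hδ)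
  have hmK : √m₀ ≤ K :=
    Real.sqrt_le_iff.2 ⟨hK.le, (hm₀M _ (harg ⟨mul_pos hK hε, hKε⟩)).trans hup⟩
  have hleft : 0 < √m₀ * ε := mul_pos (Real.sqrt_pos.2 hm₀) hε
  have hsub : Icc (√m₀ * ε) (K * ε) ⊆ Ioo 0 δbar := Icc_subset_Ioo hleft hKε
  have hcont : ContinuousOn (fun δ => M (c * h δ)) (Ioo 0 δbar) :=
    hM.comp (continuousOn_const.mul hhcont) harg
  have hleft_mem : √m₀ * ε ∈ Ioo 0 δbar :=
    hsub (left_mem_Icc.2 (mul_le_mul_of_nonneg_right hmK hε.le))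
  obtain ⟨δ, hδ, heq⟩ := exists_sq_mul_eq_sq hm₀.le hε.le hmK (hcont.mono hsub)
    (hm₀M _ (harg hleft_mem)) hup
  exact ⟨δ, hsub hδ, heq, hδ⟩

theorem stmt2_general {p m₀ δbar A : ℝ} (hp : 0 < p) (hm₀ : 0 < m₀) {M : ℝ → ℝ}
    (hM : ContinuousOn M (Ici 0)) (hm₀M : ∀ t, 0 ≤ t → m₀ ≤ M t)
    (hMlim : Tendsto (fun t => M t / t ^ (2 / p)) atTop (𝓝 0)) (hδbar : 0 < δbar)
    {h : ℝ → ℝ} (hhcont : ContinuousOn h (Ioo 0 δbar)) (hh : ∀ δ ∈ Ioo 0 δbar, 0 ≤ h δ)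
    (hlim : Tendsto (fun δ => h δ / δ ^ p) (𝓝[>] 0) (𝓝 A)) :
    ∃ K > 0, ∃ ε₁ > 0, ∀ ε ∈ Ioo 0 ε₁, ∃ δ ∈ Ioo 0 δbar,
      ε ^ 2 * M (ε ^ (-p) * h δ) = δ ^ 2 ∧ √m₀ * ε ≤ δ ∧ δ ≤ K * ε := by
  have hA : 0 ≤ A := nonneg_of_tendsto_div_rpow hδbar hh hlim
  obtain ⟨K, hK, hMK⟩ := exists_pos_comp_mul_rpow_lt_sq hp hA hMlim
  obtain ⟨ε₁, hε₁, hsmall⟩ := mem_nhdsGT_iff_exists_Ioo_subset.1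
    (eventually_comp_rpow_neg_mul_lt hM hδbar hh hlim hK hMK)
  refine ⟨K, hK, ε₁, hε₁, fun ε hε => ?_⟩
  obtain ⟨hKε, hup⟩ := hsmall hε
  exact exists_sq_mul_comp_eq_sq hm₀ hM hm₀M hhcont hh hK hε.1 hKε
    (Real.rpow_nonneg hε.1.le _) hup.le

theorem stmt2 (N : ℕ) (hN : 3 ≤ N) (m₀ : ℝ) (hm₀ : 0 < m₀)
    (M : ℝ → ℝ) (hMcont : ContinuousOn M (Set.Ici 0))
    (hM1 : ∀ t : ℝ, 0 ≤ t → m₀ ≤ M t)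
    (hM3 : Tendsto (fun t : ℝ => M t / t ^ ((2 : ℝ) / ((N : ℝ) - 2))) atTop (nhds 0))
    (δbar A : ℝ) (hδbar : 0 < δbar) (hA : 0 < A)
    (h : ℝ → ℝ) (hhcont : ContinuousOn h (Set.Ioo 0 δbar))
    (hhpos : ∀ δ ∈ Set.Ioo (0 : ℝ) δbar, 0 < h δ)
    (hlim : Tendsto (fun δ : ℝ => h δ / δ ^ ((N : ℝ) - 2)) (nhdsWithin 0 (Set.Ioi 0))
      (nhds A)) :
    ∃ K > 0, ∃ ε₁ > 0, ∀ ε ∈ Set.Ioo (0 : ℝ) ε₁, ∃ δε ∈ Set.Ioo (0 : ℝ) δbar,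
      ε ^ 2 * M (ε ^ ((2 : ℝ) - (N : ℝ)) * h δε) = δε ^ 2 ∧
      Real.sqrt m₀ * ε ≤ δε ∧ δε ≤ K * ε := by
  have hp : 0 < (N : ℝ) - 2 := sub_pos.2 (by exact_mod_cast hN)
  simpa only [neg_sub] using
    stmt2_general hp hm₀ hMcont hM1 hM3 hδbar hhcont (fun δ hδ => (hhpos δ hδ).le) hlim
end

section
/- Let $N \in \{1,2\}$ and $m_0 > 0$. Let $M : [0,\infty) \to \mathbb{R}$ be continuous with $M(t) \geq m_0$ for all $t \geq 0$. Let $\bar\delta > 0$, $A > 0$, and let $h : (0,\bar\delta) \to (0,\infty)$ be continuous with $\lim_{\delta \to 0^+} h(\delta)/\delta^{N-2} = A$. Then there exist $K > 0$ and $\varepsilon_1 > 0$ such that for every $\varepsilon \in (0,\varepsilon_1)$ there exists $\delta_\varepsilon \in (0,\bar\delta)$ with $\varepsilon^2\, M\big(\varepsilon^{2-N} h(\delta_\varepsilon)\big) = \delta_\varepsilon^{\,2}$ and $\sqrt{m_0}\,\varepsilon \leq \delta_\varepsilon \leq K\varepsilon$. -/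
open MeasureTheory Filter

/-!
Substituting `δ = ε * κ` turns the equation into `M (ε ^ (2 - N) * h (ε * κ)) = κ ^ 2`. Since
`h δ = O(δ ^ (N - 2))`, the argument of `M` is at most `C * κ ^ (N - 2)` for small `ε * κ`; as
`N ≤ 2`, this is bounded for `κ ≥ √m₀`, uniformly in `ε`. So is `M` there by compactness, hence the
left side lies below `κ ^ 2` at some `κ = K` independent of `ε`. At `κ = √m₀` it lies above
`κ ^ 2`, and the intermediate value theorem gives a solution in between.
-/

open Asymptotics Set
open scoped Topology

theorem eventually_forall_mem_le_of_isCompact {X ι : Type*} [TopologicalSpace X] {s : Set X}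
    {f : X → ℝ} {l : Filter ι} {g : ι → ℝ} (hs : IsCompact s) (hf : ContinuousOn f s)
    (hg : Tendsto g l atTop) : ∀ᶠ i in l, ∀ x ∈ s, f x ≤ g i := by
  obtain ⟨C, hC⟩ := hs.bddAbove_image hf
  filter_upwards [hg.eventually_ge_atTop C] with i hi x hx
  exact (hC (mem_image_of_mem f hx)).trans hi

theorem isBigO_rpow_of_tendsto_div {h : ℝ → ℝ} {r A : ℝ}
    (hlim : Tendsto (fun δ => h δ / δ ^ r) (𝓝[>] 0) (𝓝 A)) :
    h =O[𝓝[>] 0] fun δ => δ ^ r := by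
  refine isBigO_of_div_tendsto_nhds ?_ A hlim
  filter_upwards [self_mem_nhdsWithin] with δ hδ hzero
  exact absurd hzero (Real.rpow_pos_of_pos hδ r).ne'

theorem exists_forall_rpow_mul_le_of_isBigO {h : ℝ → ℝ} {p : ℝ}
    (hh : h =O[𝓝[>] 0] fun δ => δ ^ (-p)) :
    ∃ C > 0, ∃ d > 0, ∀ ε > 0, ∀ κ > 0, ε * κ < d → ε ^ p * h (ε * κ) ≤ C * κ ^ (-p) := by
  obtain ⟨C, hC, hbound⟩ := hh.exists_pos
  obtain ⟨d, hd, hsub⟩ := mem_nhdsGT_iff_exists_Ioo_subset.mp hbound.bound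
  refine ⟨C, hC, d, hd, fun ε hε κ hκ hlt => ?_⟩
  have hεκ : 0 < ε * κ := mul_pos hε hκ
  have hle : h (ε * κ) ≤ C * (ε * κ) ^ (-p) := by
    have hnorm : ‖h (ε * κ)‖ ≤ C * ‖(ε * κ) ^ (-p)‖ := hsub ⟨hεκ, hlt⟩
    rw [Real.norm_of_nonneg (Real.rpow_nonneg hεκ.le _)] at hnorm
    exact (le_abs_self _).trans hnorm
  calc ε ^ p * h (ε * κ) ≤ ε ^ p * (C * (ε * κ) ^ (-p)) := by gcongr
    _ = C * (ε ^ p * ε ^ (-p)) * κ ^ (-p) := by rw [Real.mul_rpow hε.le hκ.le]; ring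
    _ = C * κ ^ (-p) := by rw [← Real.rpow_add hε, add_neg_cancel, Real.rpow_zero, mul_one]

theorem exists_ge_forall_comp_rpow_mul_le_sq {M h : ℝ → ℝ} {p a : ℝ} (hp : 0 ≤ p) (ha : 0 < a)
    (hM : ContinuousOn M (Ici 0)) (hh : h =O[𝓝[>] 0] fun δ => δ ^ (-p)) :
    ∃ K ≥ a, ∃ d > 0, ∀ ε > 0, ε * K < d → 0 ≤ h (ε * K) → M (ε ^ p * h (ε * K)) ≤ K ^ 2 := by
  obtain ⟨C, hC, d, hd, hbound⟩ := exists_forall_rpow_mul_le_of_isBigO hh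
  have hMsq : ∀ᶠ K : ℝ in atTop, ∀ t ∈ Icc 0 (C * a ^ (-p)), M t ≤ K ^ 2 :=
    eventually_forall_mem_le_of_isCompact isCompact_Icc (hM.mono Icc_subset_Ici_self)
      (tendsto_pow_atTop two_ne_zero)
  obtain ⟨K, hMK, haK⟩ := (hMsq.and (eventually_ge_atTop a)).exists
  refine ⟨K, haK, d, hd, fun ε hε hεK hhK => hMK _ ⟨by positivity, ?_⟩⟩
  calc ε ^ p * h (ε * K) ≤ C * K ^ (-p) := hbound ε hε K (ha.trans_le haK) hεK
    _ ≤ C * a ^ (-p) := mul_le_mul_of_nonneg_left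
      (Real.rpow_le_rpow_of_nonpos ha haK (neg_nonpos.mpr hp)) hC.le

theorem exists_mem_Icc_comp_eq_sq {M g : ℝ → ℝ} {a b : ℝ} (hab : a ≤ b)
    (hM : ContinuousOn M (Ici 0)) (hMa : ∀ t, 0 ≤ t → a ^ 2 ≤ M t)
    (hg : ContinuousOn g (Icc a b)) (hg₀ : ∀ κ ∈ Icc a b, 0 ≤ g κ) (hMb : M (g b) ≤ b ^ 2) :
    ∃ κ ∈ Icc a b, M (g κ) = κ ^ 2 := by
  have ha : a ∈ Icc a b := left_mem_Icc.mpr hab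
  obtain ⟨κ, hκ, heq⟩ := isPreconnected_Icc.intermediate_value₂ ha (right_mem_Icc.mpr hab)
    (continuousOn_pow 2) (hM.comp hg hg₀) (hMa _ (hg₀ a ha)) hMb
  exact ⟨κ, hκ, heq.symm⟩

theorem stmt3_general {N m₀ : ℝ} (hN : N ≤ 2) (hm₀ : 0 < m₀)
    {M : ℝ → ℝ} (hMcont : ContinuousOn M (Ici 0)) (hM : ∀ t, 0 ≤ t → m₀ ≤ M t)
    {δbar : ℝ} (hδbar : 0 < δbar)
    {h : ℝ → ℝ} (hhcont : ContinuousOn h (Ioo 0 δbar)) (hh₀ : ∀ δ ∈ Ioo 0 δbar, 0 ≤ h δ)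
    (hh : h =O[𝓝[>] 0] fun δ => δ ^ (N - 2)) :
    ∃ K > 0, ∃ ε₁ > 0, ∀ ε ∈ Ioo 0 ε₁, ∃ δ ∈ Ioo 0 δbar,
      ε ^ 2 * M (ε ^ (2 - N) * h δ) = δ ^ 2 ∧ √m₀ * ε ≤ δ ∧ δ ≤ K * ε := by
  rw [← neg_sub 2 N] at hh
  have hsqrt : 0 < √m₀ := Real.sqrt_pos.mpr hm₀
  obtain ⟨K, hK, d, hd, hMK⟩ :=
    exists_ge_forall_comp_rpow_mul_le_sq (sub_nonneg.mpr hN) hsqrt hMcont hh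
  have hK₀ : 0 < K := hsqrt.trans_le hK
  refine ⟨K, hK₀, min d δbar / K, by positivity, fun ε ⟨hε, hε₁⟩ => ?_⟩
  obtain ⟨hεd, hεδbar⟩ := lt_min_iff.mp ((lt_div_iff₀ hK₀).mp hε₁)
  have hmaps : MapsTo (ε * ·) (Icc √m₀ K) (Ioo 0 δbar) := fun κ hκ =>
    ⟨mul_pos hε (hsqrt.trans_le hκ.1), (mul_le_mul_of_nonneg_left hκ.2 hε.le).trans_lt hεδbar⟩
  have hargcont : ContinuousOn (fun κ => ε ^ (2 - N) * h (ε * κ)) (Icc √m₀ K) :=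
    continuousOn_const.mul (hhcont.comp (by fun_prop) hmaps)
  have harg₀ : ∀ κ ∈ Icc √m₀ K, 0 ≤ ε ^ (2 - N) * h (ε * κ) := fun κ hκ =>
    mul_nonneg (Real.rpow_nonneg hε.le _) (hh₀ _ (hmaps hκ))
  obtain ⟨κ, hκ, heq⟩ := exists_mem_Icc_comp_eq_sq hK hMcont
    (by simpa only [Real.sq_sqrt hm₀.le] using hM) hargcont harg₀
    (hMK ε hε hεd (hh₀ _ (hmaps (right_mem_Icc.mpr hK))))
  refine ⟨ε * κ, hmaps hκ, by rw [heq, mul_pow], ?_, ?_⟩ <;> rw [mul_comm _ ε]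
  exacts [mul_le_mul_of_nonneg_left hκ.1 hε.le, mul_le_mul_of_nonneg_left hκ.2 hε.le]

theorem stmt3 (N : ℕ) (hN : N = 1 ∨ N = 2) (m₀ : ℝ) (hm₀ : 0 < m₀)
    (M : ℝ → ℝ) (hMcont : ContinuousOn M (Set.Ici 0))
    (hM1 : ∀ t : ℝ, 0 ≤ t → m₀ ≤ M t)
    (δbar A : ℝ) (hδbar : 0 < δbar) (hA : 0 < A)
    (h : ℝ → ℝ) (hhcont : ContinuousOn h (Set.Ioo 0 δbar))
    (hhpos : ∀ δ ∈ Set.Ioo (0 : ℝ) δbar, 0 < h δ)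
    (hlim : Tendsto (fun δ : ℝ => h δ / δ ^ ((N : ℝ) - 2)) (nhdsWithin 0 (Set.Ioi 0))
      (nhds A)) :
    ∃ K > 0, ∃ ε₁ > 0, ∀ ε ∈ Set.Ioo (0 : ℝ) ε₁, ∃ δε ∈ Set.Ioo (0 : ℝ) δbar,
      ε ^ 2 * M (ε ^ ((2 : ℝ) - (N : ℝ)) * h δε) = δε ^ 2 ∧
      Real.sqrt m₀ * ε ≤ δε ∧ δε ≤ K * ε := by
  exact stmt3_general (by rcases hN with rfl | rfl <;> norm_num) hm₀ hMcont hM1 hδbar hhcont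
    (fun δ hδ => (hhpos δ hδ).le) (isBigO_rpow_of_tendsto_div hlim)
end

section
/- Let $N \geq 4$ be a natural number and let $a, b > 0$. Let $A > 0$ be such that $\inf_{t > 0}\,\big(a + b A\, t^{N-2} - t^2\big) < 0$. Let $\bar\delta > 0$ and let $h : (0,\bar\delta) \to (0,\infty)$ be continuous with $\lim_{\delta \to 0^+} h(\delta)/\delta^{N-2} = A$. Then there exist $K > 0$ and $\varepsilon_1 > 0$ such that for every $\varepsilon \in (0,\varepsilon_1)$ there exists $\delta_\varepsilon \in (0,\bar\delta)$ with $\varepsilon^2\big(a + b\,\varepsilon^{2-N} h(\delta_\varepsilon)\big) = \delta_\varepsilon^{\,2}$ and $\sqrt{a}\,\varepsilon \leq \delta_\varepsilon \leq K\varepsilon$. -/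
open MeasureTheory Filter

open Set Topology

/-!
Rescale by `δ = T ε`: since `h δ ~ A δ ^ p`, the quantity `M (ε ^ (-p) * h (T ε))` tends to
`M (A T ^ p)` as `ε → 0⁺`. If `M (A T ^ p) < T ^ 2` for some `T`, then for small `ε` the continuous
function `δ ↦ ε ^ 2 * M (ε ^ (-p) * h δ) - δ ^ 2` is negative at `δ = T ε`, while `a ≤ M` makes it
nonnegative at `δ = √a ε`; it vanishes in between.
-/

theorem tendsto_rpow_neg_mul_comp_const_mul {h : ℝ → ℝ} {p A T : ℝ} (hT : 0 < T)
    (hlim : Tendsto (fun δ : ℝ => h δ / δ ^ p) (𝓝[>] 0) (𝓝 A)) :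
    Tendsto (fun ε : ℝ => ε ^ (-p) * h (T * ε)) (𝓝[>] 0) (𝓝 (A * T ^ p)) := by
  have hscale : Tendsto (fun ε : ℝ => T * ε) (𝓝[>] 0) (𝓝[>] 0) :=
    tendsto_iff_comap.2 (comap_mulLeft_nhdsGT_zero hT).ge
  refine ((hlim.comp hscale).mul_const (T ^ p)).congr' ?_
  filter_upwards [self_mem_nhdsWithin] with ε (hε : 0 < ε)
  have hTp : T ^ p ≠ 0 := (Real.rpow_pos_of_pos hT p).ne'
  calc h (T * ε) / (T * ε) ^ p * T ^ p = h (T * ε) / (T ^ p * ε ^ p) * T ^ p := by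
        rw [Real.mul_rpow hT.le hε.le]
    _ = (ε ^ p)⁻¹ * h (T * ε) := by field_simp
    _ = ε ^ (-p) * h (T * ε) := by rw [Real.rpow_neg hε.le]

theorem exists_mem_Icc_sq_mul_eq_sq {f : ℝ → ℝ} {c T ε : ℝ} (hε : 0 ≤ ε) (hcT : c ≤ T)
    (hf : ContinuousOn f (Icc (c * ε) (T * ε))) (hc : c ^ 2 ≤ f (c * ε))
    (hT : f (T * ε) ≤ T ^ 2) :
    ∃ δ ∈ Icc (c * ε) (T * ε), ε ^ 2 * f δ = δ ^ 2 := by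
  have hle : c * ε ≤ T * ε := by gcongr
  have hleft : (c * ε) ^ 2 ≤ ε ^ 2 * f (c * ε) := by
    rw [mul_pow, mul_comm]
    gcongr
  have hright : ε ^ 2 * f (T * ε) ≤ (T * ε) ^ 2 := by
    rw [mul_pow, mul_comm (T ^ 2)]
    gcongr
  exact isPreconnected_Icc.intermediate_value₂ (right_mem_Icc.2 hle) (left_mem_Icc.2 hle)
    (hf.const_mul (ε ^ 2)) (continuousOn_pow 2) hright hleft

theorem stmt4_general {M h : ℝ → ℝ} {a p A T δbar : ℝ} (ha : 0 < a)
    (hMcont : ContinuousOn M (Ioi 0)) (hMlower : ∀ s > 0, a ≤ M s)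
    (hA : 0 < A) (hT : 0 < T) (hMT : M (A * T ^ p) < T ^ 2) (hδbar : 0 < δbar)
    (hhcont : ContinuousOn h (Ioo 0 δbar)) (hhpos : ∀ δ ∈ Ioo 0 δbar, 0 < h δ)
    (hlim : Tendsto (fun δ : ℝ => h δ / δ ^ p) (𝓝[>] 0) (𝓝 A)) :
    ∃ ε₁ > 0, ∀ ε ∈ Ioo 0 ε₁, ∃ δ ∈ Ioo 0 δbar,
      ε ^ 2 * M (ε ^ (-p) * h δ) = δ ^ 2 ∧ √a * ε ≤ δ ∧ δ ≤ T * ε := by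
  have hATp : 0 < A * T ^ p := mul_pos hA (Real.rpow_pos_of_pos hT p)
  have hsqrt : √a ≤ T := (Real.sqrt_le_left hT.le).2 ((hMlower _ hATp).trans hMT.le)
  have hMlim : Tendsto (fun ε : ℝ => M (ε ^ (-p) * h (T * ε))) (𝓝[>] 0) (𝓝 (M (A * T ^ p))) :=
    (hMcont.continuousAt (Ioi_mem_nhds hATp)).tendsto.comp
      (tendsto_rpow_neg_mul_comp_const_mul hT hlim)
  obtain ⟨η, hη : 0 < η, hMη⟩ :=
    mem_nhdsGT_iff_exists_Ioo_subset.1 (hMlim.eventually_lt_const hMT)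
  refine ⟨min η (δbar / T), by positivity, fun ε ⟨hε, hεlt⟩ => ?_⟩
  have hTε : T * ε < δbar := (lt_div_iff₀' hT).1 (hεlt.trans_le (min_le_right _ _))
  have hsub : Icc (√a * ε) (T * ε) ⊆ Ioo 0 δbar := Icc_subset_Ioo (by positivity) hTε
  have hscaled_pos : ∀ δ ∈ Icc (√a * ε) (T * ε), 0 < ε ^ (-p) * h δ := fun δ hδ =>
    mul_pos (Real.rpow_pos_of_pos hε _) (hhpos δ (hsub hδ))
  have hcont : ContinuousOn (fun δ => M (ε ^ (-p) * h δ)) (Icc (√a * ε) (T * ε)) :=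
    hMcont.comp ((hhcont.mono hsub).const_mul _) hscaled_pos
  have hleft : √a ^ 2 ≤ M (ε ^ (-p) * h (√a * ε)) := by
    rw [Real.sq_sqrt ha.le]
    exact hMlower _ (hscaled_pos _ (left_mem_Icc.2 (by gcongr)))
  have hright : M (ε ^ (-p) * h (T * ε)) < T ^ 2 := hMη ⟨hε, hεlt.trans_le (min_le_left _ _)⟩
  obtain ⟨δ, hδ, heq⟩ := exists_mem_Icc_sq_mul_eq_sq hε.le hsqrt hcont hleft hright.le
  exact ⟨δ, hsub hδ, heq, hδ⟩

theorem stmt4 (N : ℕ) (hN : 4 ≤ N) (a b : ℝ) (ha : 0 < a) (hb : 0 < b)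
    (A : ℝ) (hA : 0 < A)
    (hinf : sInf ((fun t : ℝ => a + b * A * t ^ ((N : ℝ) - 2) - t ^ 2) '' Set.Ioi 0) < 0)
    (δbar : ℝ) (hδbar : 0 < δbar)
    (h : ℝ → ℝ) (hhcont : ContinuousOn h (Set.Ioo 0 δbar))
    (hhpos : ∀ δ ∈ Set.Ioo (0 : ℝ) δbar, 0 < h δ)
    (hlim : Tendsto (fun δ : ℝ => h δ / δ ^ ((N : ℝ) - 2)) (nhdsWithin 0 (Set.Ioi 0))
      (nhds A)) :
    ∃ K > 0, ∃ ε₁ > 0, ∀ ε ∈ Set.Ioo (0 : ℝ) ε₁, ∃ δε ∈ Set.Ioo (0 : ℝ) δbar,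
      ε ^ 2 * (a + b * (ε ^ ((2 : ℝ) - (N : ℝ)) * h δε)) = δε ^ 2 ∧
      Real.sqrt a * ε ≤ δε ∧ δε ≤ K * ε := by
  obtain ⟨_, ⟨T, hT, rfl⟩, hneg⟩ := exists_lt_of_csInf_lt (nonempty_Ioi.image _) hinf
  refine ⟨T, hT, ?_⟩
  simpa only [neg_sub] using stmt4_general (M := fun s => a + b * s) ha (by fun_prop)
    (fun s hs => le_add_of_nonneg_right (by positivity)) hA hT
    (by simpa only [mul_assoc, sub_neg] using hneg) hδbar hhcont hhpos hlim
end

section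
/- Let $N \geq 3$ be a natural number, let $2 < \ell < 2^* := 2N/(N-2)$, let $\sigma > 0$ and $C_\ell > 0$. Let $M : [0,\infty) \to \mathbb{R}$ satisfy $M(t) \geq \sigma\, t^{2/(N-2)}$ for all $t \geq 0$, and let $f : \mathbb{R} \to \mathbb{R}$ be such that for every $\eta > 0$ there exists $C_\eta > 0$ with $|f(s)s| \leq \eta s^2 + C_\eta |s|^\ell$ for all $s \in \mathbb{R}$. Then there exists $V_0 > 0$, depending only on $N, \ell, \sigma, C_\ell$ and $f$, with the following property: for every measurable potential $V : \mathbb{R}^N \to \mathbb{R}$ with $V(x) \geq V_0$ for all $x$, and every differentiable function $u : \mathbb{R}^N \to \mathbb{R}$ such that the quantities $X^2 := \int_{\mathbb{R}^N}|\nabla u|^2\,dx$, $Y^2 := \int_{\mathbb{R}^N} u^2\,dx$ and $\int_{\mathbb{R}^N}|u|^\ell\,dx$ are finite, such that the Gagliardo–Nirenberg inequality $\int_{\mathbb{R}^N}|u|^\ell\,dx \leq C_\ell\, X^{N(\ell-2)/2}\, Y^{\ell - N(\ell-2)/2}$ holds, and such that the energy identity $M(X^2)\,X^2 + \int_{\mathbb{R}^N}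 V(x)\,u(x)^2\,dx \,\leq\, \int_{\mathbb{R}^N} f(u(x))\,u(x)\,dx$ holds, one has $u = 0$ almost everywhere on $\mathbb{R}^N$. -/
open MeasureTheory

/-!
Write `A = ‖∇u‖₂²` and `B = ‖u‖₂²`. The growth `σ t ^ (2 / (N - 2))` of `M` makes the Kirchhoff term
at least `σ A ^ (N / (N - 2))`, and in terms of this power the Gagliardo–Nirenberg product is
`(A ^ (N / (N - 2))) ^ θ * B ^ (1 - θ)` with `θ = (N - 2) (ℓ - 2) / 4`. Subcriticality of `ℓ` is
exactly `θ < 1`, so Young's inequality absorbs the nonlinearity into the Kirchhoff term at the cost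
of a fixed multiple of `B`, which a large potential dominates unless `B = 0`.
-/

theorem exists_mul_rpow_mul_rpow_le_add {θ σ K : ℝ} (hθ₀ : 0 ≤ θ) (hθ₁ : θ < 1) (hσ : 0 < σ)
    (hK : 0 ≤ K) :
    ∃ L ≥ 0, ∀ a b : ℝ, 0 ≤ a → 0 ≤ b → K * (a ^ θ * b ^ (1 - θ)) ≤ σ * a + L * b := by
  have hτ : 0 < 1 - θ := sub_pos.2 hθ₁
  have hKσ : 0 ≤ K / σ ^ θ := by positivity
  -- `L` solves `σ ^ θ * L ^ (1 - θ) = K`.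
  set L : ℝ := (K / σ ^ θ) ^ (1 - θ)⁻¹
  have hL : 0 ≤ L := by positivity
  have hσL : σ ^ θ * L ^ (1 - θ) = K := by
    rw [Real.rpow_inv_rpow hKσ hτ.ne', mul_div_cancel₀ _ (by positivity)]
  refine ⟨L, hL, fun a b ha hb => ?_⟩
  calc K * (a ^ θ * b ^ (1 - θ))
      = (σ * a) ^ θ * (L * b) ^ (1 - θ) := by
        rw [Real.mul_rpow hσ.le ha, Real.mul_rpow hL hb, ← hσL]; ring
    _ ≤ θ * (σ * a) + (1 - θ) * (L * b) :=
        Real.geom_mean_le_arith_mean2_weighted hθ₀ hτ.le (by positivity) (by positivity) (by ring)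
    _ ≤ σ * a + L * b :=
        add_le_add (mul_le_of_le_one_left (by positivity) hθ₁.le)
          (mul_le_of_le_one_left (by positivity) (by linarith))

/-- The exponent `θ` carried by the Kirchhoff energy `A ^ (n / (n - 2))` when the
Gagliardo–Nirenberg bound on `∫ |u| ^ ℓ` in dimension `n` is written as
`(A ^ (n / (n - 2))) ^ θ * B ^ (1 - θ)`, where `A = ‖∇u‖₂²` and `B = ‖u‖₂²`. The dimension is a
real parameter. -/
noncomputable def kirchhoffWeight (n ℓ : ℝ) : ℝ := (n - 2) * (ℓ - 2) / 4

section Weight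

variable {n ℓ : ℝ}

theorem kirchhoffWeight_nonneg (hn : 2 ≤ n) (hℓ : 2 ≤ ℓ) : 0 ≤ kirchhoffWeight n ℓ :=
  div_nonneg (mul_nonneg (sub_nonneg.2 hn) (sub_nonneg.2 hℓ)) zero_le_four

theorem kirchhoffWeight_lt_one (hn : 2 < n) (hℓ : ℓ < 2 * n / (n - 2)) :
    kirchhoffWeight n ℓ < 1 := by
  rw [lt_div_iff₀ (sub_pos.2 hn)] at hℓ
  rw [kirchhoffWeight]
  linarith

theorem sqrt_rpow_eq_rpow_kirchhoffWeight (hn : 2 < n) {A : ℝ} (hA : 0 ≤ A) :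
    √A ^ (n * (ℓ - 2) / 2) = (A ^ (2 / (n - 2)) * A) ^ kirchhoffWeight n ℓ := by
  have hn' : 0 < n - 2 := sub_pos.2 hn
  rw [← Real.rpow_add_one' hA (by positivity), ← Real.rpow_mul hA, ← Real.rpow_div_two_eq_sqrt _ hA,
    kirchhoffWeight]
  congr 1
  field_simp
  ring

theorem sqrt_rpow_eq_rpow_one_sub_kirchhoffWeight {B : ℝ} (hB : 0 ≤ B) :
    √B ^ (ℓ - n * (ℓ - 2) / 2) = B ^ (1 - kirchhoffWeight n ℓ) := by
  rw [← Real.rpow_div_two_eq_sqrt _ hB, kirchhoffWeight]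
  congr 1
  ring

theorem exists_gagliardoNirenberg_le_kirchhoff_add {σ K : ℝ} (hn : 2 < n) (hℓ : 2 ≤ ℓ)
    (hℓ' : ℓ < 2 * n / (n - 2)) (hσ : 0 < σ) (hK : 0 ≤ K) :
    ∃ L ≥ 0, ∀ A B : ℝ, 0 ≤ A → 0 ≤ B →
      K * (√A ^ (n * (ℓ - 2) / 2) * √B ^ (ℓ - n * (ℓ - 2) / 2)) ≤
        σ * A ^ (2 / (n - 2)) * A + L * B := by
  obtain ⟨L, hL, young⟩ := exists_mul_rpow_mul_rpow_le_add (kirchhoffWeight_nonneg hn.le hℓ)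
    (kirchhoffWeight_lt_one hn hℓ') hσ hK
  refine ⟨L, hL, fun A B hA hB => ?_⟩
  rw [sqrt_rpow_eq_rpow_kirchhoffWeight hn hA, sqrt_rpow_eq_rpow_one_sub_kirchhoffWeight hB,
    mul_assoc σ]
  exact young _ _ (by positivity) hB

end Weight

section Integral

variable {α : Type*} [MeasurableSpace α] {μ : Measure α} {u : α → ℝ}

theorem mul_integral_le_integral_mul_of_ae_le {c : ℝ} {V g : α → ℝ} (hV : ∀ᵐ x ∂μ, c ≤ V x)
    (hg : 0 ≤ g) (hg_int : Integrable g μ) (hVg : Integrable (fun x => V x * g x) μ) :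
    c * ∫ x, g x ∂μ ≤ ∫ x, V x * g x ∂μ := by
  rw [← integral_const_mul]
  refine integral_mono_ae (hg_int.const_mul c) hVg ?_
  filter_upwards [hV] with x hx using mul_le_mul_of_nonneg_right hx (hg x)

theorem integral_comp_mul_self_le {f : ℝ → ℝ} {η C ℓ : ℝ}
    (hf : ∀ s, f s * s ≤ η * s ^ 2 + C * |s| ^ ℓ) (hu : Integrable (fun x => u x ^ 2) μ)
    (huℓ : Integrable (fun x => |u x| ^ ℓ) μ) (hfu : Integrable (fun x => f (u x) * u x) μ) :
    ∫ x, f (u x) * u x ∂μ ≤ η * ∫ x, u x ^ 2 ∂μ + C * ∫ x, |u x| ^ ℓ ∂μ := by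
  rw [← integral_const_mul, ← integral_const_mul,
    ← integral_add (hu.const_mul η) (huℓ.const_mul C)]
  exact integral_mono hfu ((hu.const_mul η).add (huℓ.const_mul C)) fun x => hf (u x)

theorem ae_eq_zero_of_integral_sq_nonpos (hu : Integrable (fun x => u x ^ 2) μ)
    (h : ∫ x, u x ^ 2 ∂μ ≤ 0) : ∀ᵐ x ∂μ, u x = 0 := by
  have hu_sq : 0 ≤ fun x => u x ^ 2 := fun x => sq_nonneg (u x)
  have hsq := (integral_eq_zero_iff_of_nonneg hu_sq hu).1 (h.antisymm (integral_nonneg hu_sq))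
  filter_upwards [hsq] with x hx using pow_eq_zero_iff two_ne_zero |>.1 hx

/-- `A` stands for the Dirichlet energy `∫ ‖∇u‖²`, `n` for the dimension. -/
theorem stmt10_general (μ : Measure α) {n ℓ σ K η C : ℝ} (hn : 2 < n) (hℓ : 2 ≤ ℓ)
    (hℓ' : ℓ < 2 * n / (n - 2)) (hσ : 0 < σ) (hK : 0 ≤ K) (hη : 0 ≤ η) (hC : 0 ≤ C) {f : ℝ → ℝ}
    (hf : ∀ s, f s * s ≤ η * s ^ 2 + C * |s| ^ ℓ) :
    ∃ V₀ > 0, ∀ M : ℝ → ℝ, (∀ t, 0 ≤ t → σ * t ^ (2 / (n - 2)) ≤ M t) →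
      ∀ V : α → ℝ, (∀ᵐ x ∂μ, V₀ ≤ V x) → ∀ (u : α → ℝ) (A : ℝ), 0 ≤ A →
        Integrable (fun x => u x ^ 2) μ →
        Integrable (fun x => |u x| ^ ℓ) μ →
        Integrable (fun x => V x * u x ^ 2) μ →
        Integrable (fun x => f (u x) * u x) μ →
        ∫ x, |u x| ^ ℓ ∂μ ≤
          K * √A ^ (n * (ℓ - 2) / 2) * √(∫ x, u x ^ 2 ∂μ) ^ (ℓ - n * (ℓ - 2) / 2) →
        M A * A + ∫ x, V x * u x ^ 2 ∂μ ≤ ∫ x, f (u x) * u x ∂μ →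
        ∀ᵐ x ∂μ, u x = 0 := by
  obtain ⟨L, hL, young⟩ :=
    exists_gagliardoNirenberg_le_kirchhoff_add hn hℓ hℓ' hσ (mul_nonneg hC hK)
  refine ⟨η + L + 1, by positivity, fun M hM V hV u A hA hu huℓ hVu hfu hGN hE => ?_⟩
  have hu_sq : 0 ≤ fun x => u x ^ 2 := fun x => sq_nonneg (u x)
  have kirchhoff_le : σ * A ^ (2 / (n - 2)) * A ≤ M A * A :=
    mul_le_mul_of_nonneg_right (hM A hA) hA
  have potential_le := mul_integral_le_integral_mul_of_ae_le hV hu_sq hu hVu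
  have nonlinearity_le := integral_comp_mul_self_le hf hu huℓ hfu
  have power_le : C * ∫ x, |u x| ^ ℓ ∂μ ≤
      σ * A ^ (2 / (n - 2)) * A + L * ∫ x, u x ^ 2 ∂μ :=
    (mul_le_mul_of_nonneg_left hGN hC).trans <| by
      simpa only [mul_assoc] using young A _ hA (integral_nonneg hu_sq)
  exact ae_eq_zero_of_integral_sq_nonpos hu (by linarith)

end Integral

theorem stmt10 (N : ℕ) (hN : 3 ≤ N) (ℓ : ℝ) (hℓ1 : 2 < ℓ)
    (hℓ2 : ℓ < 2 * (N : ℝ) / ((N : ℝ) - 2))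
    (σ Cℓ : ℝ) (hσ : 0 < σ) (hCℓ : 0 < Cℓ)
    (M : ℝ → ℝ) (hM : ∀ t : ℝ, 0 ≤ t → σ * t ^ ((2 : ℝ) / ((N : ℝ) - 2)) ≤ M t)
    (f : ℝ → ℝ)
    (hf : ∀ η > 0, ∃ Cη > 0, ∀ s : ℝ, |f s * s| ≤ η * s ^ 2 + Cη * |s| ^ ℓ) :
    ∃ V₀ > 0, ∀ V : EuclideanSpace ℝ (Fin N) → ℝ, Measurable V → (∀ x, V₀ ≤ V x) →
      ∀ u : EuclideanSpace ℝ (Fin N) → ℝ, Differentiable ℝ u →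
        Integrable (fun x => ‖fderiv ℝ u x‖ ^ 2) →
        Integrable (fun x => u x ^ 2) →
        Integrable (fun x => |u x| ^ ℓ) →
        Integrable (fun x => V x * u x ^ 2) →
        Integrable (fun x => f (u x) * u x) →
        (∫ x, |u x| ^ ℓ) ≤
          Cℓ * Real.sqrt (∫ x, ‖fderiv ℝ u x‖ ^ 2) ^ ((N : ℝ) * (ℓ - 2) / 2) *
            Real.sqrt (∫ x, u x ^ 2) ^ (ℓ - (N : ℝ) * (ℓ - 2) / 2) →
        M (∫ x, ‖fderiv ℝ u x‖ ^ 2) * (∫ x, ‖fderiv ℝ u x‖ ^ 2) +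
            (∫ x, V x * u x ^ 2) ≤ ∫ x, f (u x) * u x →
        ∀ᵐ x, u x = 0 := by
  obtain ⟨C, hC, hfC⟩ := hf 1 one_pos
  obtain ⟨V₀, hV₀, vanishing⟩ := stmt10_general (volume : Measure (EuclideanSpace ℝ (Fin N)))
    (by exact_mod_cast hN) hℓ1.le hℓ2 hσ hCℓ.le zero_le_one hC.le
    fun s => (le_abs_self _).trans (hfC s)
  exact ⟨V₀, hV₀, fun V _ hV u _ _ => vanishing M hM V (ae_of_all _ hV) u _
    (integral_nonneg fun _ => sq_nonneg _)⟩
end
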